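/- arXiv:1205.0327 — 3 statements merged into one kernel-verified Lean document; each statement's English description precedes it below -/
import Mathlib

section
/- If G is a uniquely dimensional finite connected simple graph of order n and diameter d, then β(G) ≤ n − d − 2. -/
/-!
Complements of resolving sets are easy to produce: if `c` is an end of a diametral path, any
transversal of the `d` distance layers around `c` is one, and it stays one after adding a vertex `x`
of the layer of some `y` in it, as long as `x` and `y` are distinguished by a vertex outside.
Transversals taken from the two ends of the path differ, so the complement `T` of a unique metric
basis does not have `d` vertices.

Suppose that it has `d + 1`. Changing the transversal must then always give the same set `T`, which
forces a vertex distinguishing two vertices of one layer to be alone in a strictly higher layer.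
Hence all layers above a layer with two non-twins are single vertices, and that layer has at most
two classes of twins, told apart by adjacency to the next layer. So pairwise non-twins number at
most `d + 2`. No vertex of `T` has a twin, since exchanging the two would change `T`; and the metric
basis contains two non-twins, since otherwise the distances from one of its vertices would separate
the `d + 1` vertices of `T` with only the values `1, …, d`. Together with `T` these two are `d + 3`
pairwise non-twins.
-/

open SimpleGraph

/-- `W` is a resolving set for `G`: any two distinct vertices are distinguished
by their distance to some vertex of `W`. -/
def IsResolvingSet {V : Type*} (G : SimpleGraph V) (W : Finset V) : Prop :=
  ∀ u v : V, u ≠ v → ∃ w ∈ W, G.dist u w ≠ G.dist v w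

/-- The metric dimension of `G`: the minimum cardinality of a resolving set. -/
noncomputable def metricDim {V : Type*} (G : SimpleGraph V) : ℕ :=
  sInf {k | ∃ W : Finset V, IsResolvingSet G W ∧ W.card = k}

/-- `B` is a metric basis: a resolving set of minimum cardinality. -/
def IsMetricBasis {V : Type*} (G : SimpleGraph V) (B : Finset V) : Prop :=
  IsResolvingSet G B ∧ B.card = metricDim G

/-- `G` is uniquely dimensional: it has exactly one metric basis. -/
def UniquelyDimensional {V : Type*} (G : SimpleGraph V) : Prop :=
  ∃! B : Finset V, IsMetricBasis G B

/-- `G` is uniquely `k`-dimensional: a unique metric basis and metric dimension `k`. -/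
def UniquelyKDimensional {V : Type*} (G : SimpleGraph V) (k : ℕ) : Prop :=
  UniquelyDimensional G ∧ metricDim G = k

section

variable {V : Type*} {G : SimpleGraph V}

/-! ### Geodesics and distance layers -/

/-- The number of layers around `c`, that is, of distances from `c` to other vertices. In a
connected finite graph this is the eccentricity of `c`. -/
noncomputable def layerCount (G : SimpleGraph V) (c : V) : ℕ :=
  (G.dist c '' {c}ᶜ).ncard

theorem exists_mem_support_dist_eq (hG : G.Connected) {a b c : V} {k : ℕ} (p : G.Walk a b)
    (ha : G.dist c a ≤ k) (hb : k ≤ G.dist c b) : ∃ z ∈ p.support, G.dist c z = k := by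
  induction p with
  | nil => exact ⟨_, Walk.start_mem_support _, le_antisymm ha hb⟩
  | @cons a a' _ hadj p ih =>
    rcases ha.eq_or_lt with heq | hlt
    · exact ⟨a, Walk.start_mem_support _, heq⟩
    · have hstep : G.dist c a' ≤ G.dist c a + 1 :=
        dist_eq_one_iff_adj.2 hadj ▸ hG.dist_triangle
      obtain ⟨z, hz, hzk⟩ := ih (hstep.trans hlt) hb
      exact ⟨z, List.mem_cons_of_mem a hz, hzk⟩

theorem dist_add_dist_of_mem_support (hG : G.Connected) {a b z : V} {p : G.Walk a b}
    (hp : p.length = G.dist a b) (hz : z ∈ p.support) :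
    G.dist a z + G.dist z b = G.dist a b := by
  classical
  refine le_antisymm ?_ hG.dist_triangle
  calc G.dist a z + G.dist z b ≤ (p.takeUntil z hz).length + (p.dropUntil z hz).length :=
        add_le_add (dist_le _) (dist_le _)
    _ = G.dist a b := by rw [← Walk.length_append, Walk.take_spec, hp]

theorem exists_dist_eq_and_dist_add_dist_eq (hG : G.Connected) {a b c : V} {k : ℕ}
    (ha : G.dist c a ≤ k) (hb : k ≤ G.dist c b) :
    ∃ z, G.dist c z = k ∧ G.dist a z + G.dist z b = G.dist a b := by
  obtain ⟨p, hp⟩ := hG.exists_walk_length_eq_dist a b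
  obtain ⟨z, hz, hzk⟩ := exists_mem_support_dist_eq hG p ha hb
  exact ⟨z, hzk, dist_add_dist_of_mem_support hG hp hz⟩

theorem exists_layer_dist_ne (hG : G.Connected) {x y w c : V} {k : ℕ}
    (hx : G.dist c x ≤ k) (hy : G.dist c y ≤ k) (hw : k ≤ G.dist c w)
    (hne : G.dist x w ≠ G.dist y w) : ∃ z, G.dist c z = k ∧ G.dist x z ≠ G.dist y z := by
  obtain ⟨z, hz, hxz⟩ := exists_dist_eq_and_dist_add_dist_eq hG hx hw
  obtain ⟨z', hz', hyz'⟩ := exists_dist_eq_and_dist_add_dist_eq hG hy hw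
  by_contra! hall
  have hzeq := hall z hz
  have hzeq' := hall z' hz'
  have hyw : G.dist y w ≤ G.dist y z + G.dist z w := hG.dist_triangle
  have hxw : G.dist x w ≤ G.dist x z' + G.dist z' w := hG.dist_triangle
  omega

theorem ne_of_dist_eq_of_ne (hG : G.Connected) {c x y : V} (hxy : x ≠ y)
    (hl : G.dist c x = G.dist c y) : x ≠ c := by
  rintro rfl
  rw [dist_self] at hl
  exact hxy (hG.dist_eq_zero_iff.1 hl.symm)

theorem layerCount_eq_diam [Finite V] (hG : G.Connected) {a b : V} (hab : G.dist a b = G.diam) :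
    layerCount G a = G.diam := by
  have := hG.nonempty
  have himage : G.dist a '' {a}ᶜ = Set.Icc 1 G.diam := by
    ext k
    constructor
    · rintro ⟨v, hv, rfl⟩
      exact ⟨hG.pos_dist_of_ne (Ne.symm hv), dist_le_diam (connected_iff_ediam_ne_top.1 hG)⟩
    · rintro ⟨hk, hkd⟩
      obtain ⟨z, hz, -⟩ := exists_dist_eq_and_dist_add_dist_eq hG (a := a) (b := b) (c := a)
        (k := k) (by simp) (hab ▸ hkd)
      refine ⟨z, ?_, hz⟩
      rintro rfl
      rw [dist_self] at hz
      exact absurd hz (Nat.ne_of_lt hk)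
  rw [layerCount, himage, ← Nat.card_coe_set_eq, Nat.card_eq_fintype_card]
  simp

/-! ### Coresolving sets -/

/-- A set is coresolving if its vertices are pairwise distinguished by vertices outside it; in a
connected graph these are the complements of resolving sets. -/
def IsCoresolving (G : SimpleGraph V) (S : Set V) : Prop :=
  S.Pairwise fun u v ↦ ∃ w ∉ S, G.dist u w ≠ G.dist v w

/-- The uniqueness of a metric basis, in terms of complements and for an arbitrary size `k`:
there is at most one coresolving set of `k` vertices. -/
def AtMostOneCoresolving (G : SimpleGraph V) (k : ℕ) : Prop :=
  {S | IsCoresolving G S ∧ S.ncard = k}.Subsingleton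

theorem isCoresolving_compl_iff (hG : G.Connected) {B : Finset V} :
    IsCoresolving G (B : Set V)ᶜ ↔ IsResolvingSet G B := by
  simp only [IsCoresolving, Set.Pairwise, Set.mem_compl_iff, Finset.mem_coe, not_not]
  refine ⟨fun h u v huv ↦ ?_, fun h u _ v _ huv ↦ h u v huv⟩
  by_cases hu : u ∈ B
  · exact ⟨u, hu, by simpa using (hG.pos_dist_of_ne huv.symm).ne⟩
  by_cases hv : v ∈ B
  · exact ⟨v, hv, by simpa using (hG.pos_dist_of_ne huv).ne'⟩
  exact h hu hv huv

theorem IsCoresolving.metricDim_add_ncard_le [Fintype V] (hG : G.Connected) {S : Set V}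
    (hS : IsCoresolving G S) : metricDim G + S.ncard ≤ Fintype.card V := by
  classical
  have hres : IsResolvingSet G Sᶜ.toFinset := (isCoresolving_compl_iff hG).1 (by simpa using hS)
  have hdim : metricDim G ≤ Sᶜ.ncard := by
    rw [Set.ncard_eq_toFinset_card']
    exact Nat.sInf_le ⟨_, hres, rfl⟩
  have := S.ncard_add_ncard_compl
  rw [Nat.card_eq_fintype_card] at this
  omega

theorem UniquelyDimensional.atMostOneCoresolving [Fintype V] (hG : G.Connected)
    (hud : UniquelyDimensional G) {k : ℕ} (hk : metricDim G + k = Fintype.card V) :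
    AtMostOneCoresolving G k := by
  classical
  have hbasis : ∀ S : Set V, IsCoresolving G S → S.ncard = k → IsMetricBasis G Sᶜ.toFinset := by
    intro S hS hSk
    refine ⟨(isCoresolving_compl_iff hG).1 (by simpa using hS), ?_⟩
    have := S.ncard_add_ncard_compl
    rw [Nat.card_eq_fintype_card] at this
    rw [← Set.ncard_eq_toFinset_card']
    omega
  rintro S ⟨hS, hSk⟩ T ⟨hT, hTk⟩
  exact compl_injective (Set.toFinset_inj.1 (hud.unique (hbasis S hS hSk) (hbasis T hT hTk)))

theorem IsCoresolving.exists_notMem [Nontrivial V] {S : Set V} (hS : IsCoresolving G S) :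
    ∃ b, b ∉ S := by
  by_contra! hall
  obtain ⟨u, v, huv⟩ := exists_pair_ne V
  obtain ⟨w, hw, -⟩ := hS (hall u) (hall v) huv
  exact hw (hall w)

/-! ### Twins -/

/-- Twins are vertices that no third vertex distinguishes. In a connected graph this agrees with
the usual definition, that they have the same neighbours apart from each other. -/
def IsTwin (G : SimpleGraph V) (x y : V) : Prop :=
  ∀ w, w ≠ x → w ≠ y → G.dist x w = G.dist y w

theorem IsTwin.symm {x y : V} (hxy : IsTwin G x y) : IsTwin G y x :=
  fun w hwy hwx ↦ (hxy w hwx hwy).symm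

theorem IsTwin.dist_swap [DecidableEq V] {x y : V} (hxy : IsTwin G x y) (u v : V) :
    G.dist (Equiv.swap x y u) (Equiv.swap x y v) = G.dist u v := by
  simp only [Equiv.swap_apply_def]
  have := hxy u
  have := hxy v
  grind [SimpleGraph.dist_comm]

theorem IsCoresolving.image {S : Set V} (hS : IsCoresolving G S) (φ : Equiv.Perm V)
    (hφ : ∀ u v, G.dist (φ u) (φ v) = G.dist u v) : IsCoresolving G (φ '' S) := by
  rintro _ ⟨u, hu, rfl⟩ _ ⟨v, hv, rfl⟩ huv
  obtain ⟨w, hw, hne⟩ := hS hu hv (ne_of_apply_ne φ huv)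
  exact ⟨φ w, by simpa using hw, by simpa only [hφ] using hne⟩

theorem IsCoresolving.notMem_of_isTwin {S : Set V} (hS : IsCoresolving G S) {x y : V}
    (hx : x ∈ S) (hne : x ≠ y) (hxy : IsTwin G x y) : y ∉ S := by
  intro hy
  obtain ⟨w, hw, hxw⟩ := hS hx hy hne
  exact hxw (hxy w (by rintro rfl; exact hw hx) (by rintro rfl; exact hw hy))

theorem AtMostOneCoresolving.not_isTwin {S : Set V} (h : AtMostOneCoresolving G S.ncard)
    (hS : IsCoresolving G S) {x y : V} (hx : x ∈ S) (hne : x ≠ y) : ¬ IsTwin G x y := by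
  classical
  intro hxy
  have hswap : Equiv.swap x y '' S = S :=
    h ⟨hS.image _ hxy.dist_swap, Set.ncard_image_of_injective _ (Equiv.injective _)⟩ ⟨hS, rfl⟩
  have hy : y ∈ S := hswap ▸ ⟨x, hx, Equiv.swap_apply_left x y⟩
  exact hS.notMem_of_isTwin hx hne hxy hy

theorem IsCoresolving.ncard_le_diam [Finite V] [Nontrivial V] (hG : G.Connected) {S : Set V}
    (hS : IsCoresolving G S) (htwin : Sᶜ.Pairwise (IsTwin G)) : S.ncard ≤ G.diam := by
  obtain ⟨b, hb⟩ := hS.exists_notMem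
  have := hG.nonempty
  have hmaps : ∀ u ∈ S, G.dist b u ∈ Set.Icc 1 G.diam := fun u hu ↦
    ⟨hG.pos_dist_of_ne (by rintro rfl; exact hb hu),
      dist_le_diam (connected_iff_ediam_ne_top.1 hG)⟩
  have hinj : S.InjOn (G.dist b) := by
    intro u hu v hv huv
    by_contra hne
    obtain ⟨w, hw, hwuv⟩ := hS hu hv hne
    have hbw : ∀ t ∈ S, G.dist t w = G.dist b t := by
      intro t ht
      rcases eq_or_ne b w with rfl | hbw
      · exact dist_comm
      · rw [dist_comm, htwin hb hw hbw t (by rintro rfl; exact hb ht) (by rintro rfl; exact hw ht)]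
    exact hwuv (by rw [hbw u hu, hbw v hv, huv])
  simpa using Set.ncard_le_ncard_of_injOn _ hmaps hinj

/-! ### Transversals of the layers -/

theorem ncard_le_of_injOn_dist [Finite V] {c : V} {S : Set V} (hS : S.InjOn (G.dist c)) :
    S.ncard ≤ layerCount G c + 1 :=
  calc
    S.ncard ≤ (S \ {c}).ncard + 1 :=
      Nat.le_add_of_sub_le (S.pred_ncard_le_ncard_sdiff_singleton c)
    _ ≤ layerCount G c + 1 := by
      gcongr
      exact Set.ncard_le_ncard_of_injOn _ (fun v hv ↦ Set.mem_image_of_mem _ hv.2)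
        (hS.mono Set.sdiff_subset)

theorem exists_layer_transversal [Finite V] {c : V} {P : Set V} (hc : c ∉ P)
    (hP : P.InjOn (G.dist c)) :
    ∃ R, P ⊆ R ∧ c ∉ R ∧ R.InjOn (G.dist c) ∧ R.ncard = layerCount G c := by
  obtain ⟨R, hPR, hRc, himage, hinj⟩ :=
    hP.exists_subset_injOn_subset_range_eq (Set.subset_compl_singleton_iff.2 hc)
  exact ⟨R, hPR, Set.subset_compl_singleton_iff.1 hRc, hinj,
    by rw [layerCount, ← himage, hinj.ncard_image]⟩

theorem isCoresolving_of_layer {c : V} {S : Set V} (hc : c ∉ S)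
    (hS : ∀ u ∈ S, ∀ v ∈ S, u ≠ v → G.dist c u = G.dist c v →
      ∃ w ∉ S, G.dist u w ≠ G.dist v w) : IsCoresolving G S := by
  intro u hu v hv huv
  by_cases hl : G.dist c u = G.dist c v
  · exact hS u hu v hv huv hl
  · exact ⟨c, hc, by rwa [dist_comm, dist_comm (u := v)]⟩

theorem isCoresolving_of_injOn_dist {c : V} {R : Set V} (hc : c ∉ R)
    (hR : R.InjOn (G.dist c)) : IsCoresolving G R :=
  isCoresolving_of_layer hc fun _ hu _ hv huv hl ↦ absurd (hR hu hv hl) huv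

theorem isCoresolving_insert {c x y w : V} {R : Set V} (hcR : c ∉ R) (hR : R.InjOn (G.dist c))
    (hxc : x ≠ c) (hy : y ∈ R) (hl : G.dist c x = G.dist c y) (hwx : w ≠ x) (hwR : w ∉ R)
    (hne : G.dist x w ≠ G.dist y w) : IsCoresolving G (insert x R) := by
  have hw : w ∉ insert x R := by simp [hwx, hwR]
  refine isCoresolving_of_layer (c := c) (by simp [hxc.symm, hcR]) ?_
  rintro u (rfl | hu) v (rfl | hv) huv huvl
  · exact absurd rfl huv
  · obtain rfl : v = y := hR hv hy (huvl.symm.trans hl)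
    exact ⟨w, hw, hne⟩
  · obtain rfl : u = y := hR hu hy (huvl.trans hl)
    exact ⟨w, hw, hne.symm⟩
  · exact absurd (hR hu hv huvl) huv

theorem metricDim_add_diam_le [Fintype V] (hG : G.Connected) :
    metricDim G + G.diam ≤ Fintype.card V := by
  have := hG.nonempty
  obtain ⟨a, b, hab⟩ := G.exists_dist_eq_diam
  obtain ⟨R, -, haR, hR, hcard⟩ :=
    exists_layer_transversal (G := G) (Set.notMem_empty a) (Set.injOn_empty _)
  rw [← layerCount_eq_diam hG hab, ← hcard]
  exact (isCoresolving_of_injOn_dist haR hR).metricDim_add_ncard_le hG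

theorem not_atMostOneCoresolving_diam [Finite V] [Nontrivial V] (hG : G.Connected) :
    ¬ AtMostOneCoresolving G G.diam := by
  intro h
  obtain ⟨a, b, hab⟩ := G.exists_dist_eq_diam
  have hne : a ≠ b := by
    rintro rfl
    rw [dist_self] at hab
    exact connected_iff_diam_ne_zero.1 hG hab.symm
  obtain ⟨R, -, haR, hR, hRcard⟩ :=
    exists_layer_transversal (G := G) (Set.notMem_empty a) (Set.injOn_empty _)
  obtain ⟨R', haR', hbR', hR', hRcard'⟩ :=
    exists_layer_transversal (G := G) (c := b) (P := {a}) hne.symm (Set.injOn_singleton _ _)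
  rw [layerCount_eq_diam hG hab] at hRcard
  rw [layerCount_eq_diam hG (dist_comm.trans hab)] at hRcard'
  have hRR' : R = R' := h ⟨isCoresolving_of_injOn_dist haR hR, hRcard⟩
    ⟨isCoresolving_of_injOn_dist hbR' hR', hRcard'⟩
  exact haR (hRR' ▸ haR' rfl)

-- Extending `{y, w'}` to a transversal keeps out `w`, which lies in the layer of `w'`. The freedom
-- in choosing such sets is what contradicts the uniqueness of a metric basis.
theorem exists_isCoresolving_of_dist_ne [Finite V] (hG : G.Connected) {c x y w w' : V}
    (hl : G.dist c x = G.dist c y) (hlw : G.dist c w' = G.dist c w) (hw'w : w' ≠ w) (hwx : w ≠ x)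
    (hne : G.dist x w ≠ G.dist y w) (hw' : w' = y ∨ G.dist c w' ≠ G.dist c y) :
    ∃ S, (IsCoresolving G S ∧ S.ncard = layerCount G c + 1) ∧ x ∈ S ∧ y ∈ S ∧ w' ∈ S ∧ w ∉ S := by
  have hxy : x ≠ y := by rintro rfl; exact hne rfl
  have hyc : c ≠ y := (ne_of_dist_eq_of_ne hG hxy.symm hl.symm).symm
  have hw'c : c ≠ w' := (ne_of_dist_eq_of_ne hG hw'w hlw).symm
  have hinj : Set.InjOn (G.dist c) {y, w'} := by
    rw [Set.injOn_pair]
    intro heq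
    exact (hw'.resolve_right (not_not.2 heq.symm)).symm
  obtain ⟨R, hPR, hcR, hR, hcard⟩ := exists_layer_transversal (by simp [hyc, hw'c]) hinj
  have hyR : y ∈ R := hPR (by simp)
  have hw'R : w' ∈ R := hPR (by simp)
  have hwR : w ∉ R := fun hw ↦ hw'w (hR hw'R hw hlw)
  have hxR : x ∉ R := fun hx ↦ hxy (hR hx hyR hl)
  refine ⟨insert x R, ⟨isCoresolving_insert hcR hR (ne_of_dist_eq_of_ne hG hxy hl) hyR hl hwx hwR
    hne, ?_⟩, ?_⟩
  · rw [Set.ncard_insert_of_notMem hxR, hcard]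
  · simp [hyR, hw'R, hwx, hwR]

/-! ### Layers under uniqueness -/

namespace AtMostOneCoresolving

variable [Finite V] {c : V}

theorem dist_eq_of_same_layer (h : AtMostOneCoresolving G (layerCount G c + 1))
    (hG : G.Connected) {x y w : V} (hl : G.dist c x = G.dist c y) (hlw : G.dist c y = G.dist c w)
    (hwx : w ≠ x) (hwy : w ≠ y) : G.dist x w = G.dist y w := by
  by_contra hne
  have hxy : x ≠ y := by rintro rfl; exact hne rfl
  obtain ⟨S, hS, -, -, -, hwS⟩ :=
    exists_isCoresolving_of_dist_ne hG hl hlw hwy.symm hwx hne (.inl rfl)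
  by_cases heq : G.dist x y = G.dist w y
  · have hne' : G.dist y x ≠ G.dist w x := by
      rwa [dist_comm, heq, dist_comm, dist_comm (u := w), ne_comm]
    obtain ⟨S', hS', -, hwS', -⟩ := exists_isCoresolving_of_dist_ne hG (c := c) (x := y) (y := w)
      (w := x) hlw (by omega) hwx hxy hne' (.inl rfl)
    exact hwS (h hS' hS ▸ hwS')
  · obtain ⟨S', hS', -, hwS', -⟩ := exists_isCoresolving_of_dist_ne hG (c := c) (x := x) (y := w)
      (w := y) (by omega) hlw.symm hwy hxy.symm heq (.inl rfl)
    exact hwS (h hS' hS ▸ hwS')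

theorem eq_of_dist_ne (h : AtMostOneCoresolving G (layerCount G c + 1))
    (hG : G.Connected) {x y w w' : V} (hl : G.dist c x = G.dist c y) (hwx : w ≠ x) (hwy : w ≠ y)
    (hne : G.dist x w ≠ G.dist y w) (hw' : G.dist c w' = G.dist c w) : w' = w := by
  by_contra hw'w
  have hxy : x ≠ y := by rintro rfl; exact hne rfl
  have hlw : G.dist c w ≠ G.dist c y := fun hlw ↦
    hne (h.dist_eq_of_same_layer hG hl hlw.symm hwx hwy)
  obtain ⟨S, hS, -, -, hw'S, hwS⟩ :=
    exists_isCoresolving_of_dist_ne hG hl hw' hw'w hwx hne (.inr (by omega))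
  have hww' : ∀ u v, u ≠ v → u ≠ w → G.dist c u = G.dist c v → G.dist c u ≠ G.dist c w →
      G.dist w u = G.dist w' u := by
    intro u v huv huw hluv hluw
    by_contra hne'
    obtain ⟨S', hS', hwS', -⟩ := exists_isCoresolving_of_dist_ne hG (c := c) (x := w) (y := w')
      (w := u) (w' := v) hw'.symm hluv.symm huv.symm huw hne' (.inr (by omega))
    exact hwS (h hS' hS ▸ hwS')
  have hx := hww' x y hxy hwx.symm hl (by omega)
  have hy := hww' y x hxy.symm hwy.symm hl.symm (by omega)
  have hne' : G.dist x w' ≠ G.dist y w' := by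
    rwa [dist_comm, ← hx, dist_comm (u := y), ← hy, dist_comm, dist_comm (u := w)]
  obtain ⟨S', hS', -, -, -, hw'S'⟩ := exists_isCoresolving_of_dist_ne hG hl hw'.symm
    (Ne.symm hw'w) (by rintro rfl; omega) hne' (.inr hlw)
  exact hw'S' (h hS' hS ▸ hw'S)

theorem dist_lt_of_dist_ne (h : AtMostOneCoresolving G (layerCount G c + 1))
    (hG : G.Connected) {x y w : V} (hl : G.dist c x = G.dist c y) (hwx : w ≠ x) (hwy : w ≠ y)
    (hne : G.dist x w ≠ G.dist y w) : G.dist c x < G.dist c w := by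
  by_contra! hle
  have hthrough : ∀ u, G.dist c w ≤ G.dist c u → G.dist c w + G.dist w u = G.dist c u := by
    intro u hu
    obtain ⟨z, hz, hcz⟩ :=
      exists_dist_eq_and_dist_add_dist_eq hG (a := c) (c := c) (by simp) hu
    obtain rfl := h.eq_of_dist_ne hG hl hwx hwy hne hz
    exact hcz
  have hx := hthrough x hle
  have hy := hthrough y (hl ▸ hle)
  rw [dist_comm, dist_comm (u := y)] at hne
  omega

theorem exists_gate (h : AtMostOneCoresolving G (layerCount G c + 1))
    (hG : G.Connected) {x y : V} (hl : G.dist c x = G.dist c y) (hxy : ¬ IsTwin G x y) :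
    ∃ z, G.dist c z = G.dist c x + 1 ∧ G.dist x z ≠ G.dist y z ∧
      ∀ a e, G.dist c a = G.dist c x → G.dist c x < G.dist c e →
        G.dist a z + G.dist z e = G.dist a e := by
  simp only [IsTwin, not_forall] at hxy
  obtain ⟨w, hwx, hwy, hne⟩ := hxy
  obtain ⟨z, hz, hxyz⟩ := exists_layer_dist_ne hG (c := c) (k := G.dist c x + 1)
    (by omega) (by omega) (h.dist_lt_of_dist_ne hG hl hwx hwy hne) hne
  refine ⟨z, hz, hxyz, fun a e ha he ↦ ?_⟩
  obtain ⟨z', hz', hadd⟩ := exists_dist_eq_and_dist_add_dist_eq hG (a := a) (b := e) (c := c)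
    (k := G.dist c x + 1) (by omega) he
  obtain rfl : z' = z := h.eq_of_dist_ne hG hl (by rintro rfl; omega) (by rintro rfl; omega) hxyz
    (hz'.trans hz.symm)
  exact hadd

theorem eq_of_layer_gt (h : AtMostOneCoresolving G (layerCount G c + 1))
    (hG : G.Connected) {x y u v : V} (hl : G.dist c x = G.dist c y) (hxy : ¬ IsTwin G x y)
    (hu : G.dist c x < G.dist c u) (huv : G.dist c u = G.dist c v) : u = v := by
  obtain ⟨z, hz, hne, hgate⟩ := h.exists_gate hG hl hxy
  have hxv := hgate x v rfl (huv ▸ hu)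
  have hyv := hgate y v hl.symm (huv ▸ hu)
  exact h.eq_of_dist_ne hG hl (by rintro rfl; omega) (by rintro rfl; omega) (by omega) huv

theorem adj_of_dist_lt (h : AtMostOneCoresolving G (layerCount G c + 1))
    (hG : G.Connected) {x y z : V} (hl : G.dist c x = G.dist c y)
    (hz : G.dist c z = G.dist c x + 1) (hlt : G.dist x z < G.dist y z) : G.Adj x z := by
  have hxy : ¬ IsTwin G x y := fun hxy ↦
    hlt.ne (hxy z (by rintro rfl; omega) (by rintro rfl; omega))
  obtain ⟨z', hz', -, hgate⟩ := h.exists_gate hG hl hxy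
  obtain rfl : z = z' := h.eq_of_layer_gt hG hl hxy (by omega) (by omega)
  by_contra hadj
  have hpos : 0 < G.dist x z := hG.pos_dist_of_ne (by rintro rfl; omega)
  obtain ⟨q, hzq, hqx⟩ := exists_dist_eq_and_dist_add_dist_eq hG (a := z) (b := x) (c := z)
    (k := 1) (by simp) (dist_comm (G := G) ▸ hpos)
  have hqz : G.dist q z = 1 := dist_comm.trans hzq
  rw [dist_comm (u := z) (v := x), dist_comm (u := q) (v := x)] at hqx
  have hyq : G.dist y z ≤ G.dist y q + G.dist q z := hG.dist_triangle
  have hq_ne_x : q ≠ x := by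
    rintro rfl
    exact hadj (dist_eq_one_iff_adj.1 hqz)
  have hq_ne_y : q ≠ y := by
    rintro rfl
    omega
  have hq := h.dist_lt_of_dist_ne hG hl hq_ne_x hq_ne_y (by omega)
  have hxq := hgate x q rfl hq
  omega

theorem not_adj_iff_adj (h : AtMostOneCoresolving G (layerCount G c + 1))
    (hG : G.Connected) {x y z : V} (hl : G.dist c x = G.dist c y) (hxy : ¬ IsTwin G x y)
    (hz : G.dist c z = G.dist c x + 1) : ¬ (G.Adj x z ↔ G.Adj y z) := by
  obtain ⟨z', hz', hne, -⟩ := h.exists_gate hG hl hxy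
  obtain rfl : z = z' := h.eq_of_layer_gt hG hl hxy (by omega) (by omega)
  rw [← dist_eq_one_iff_adj, ← dist_eq_one_iff_adj]
  rcases hne.lt_or_gt with hlt | hlt
  · have := dist_eq_one_iff_adj.2 (h.adj_of_dist_lt hG hl hz hlt)
    omega
  · have := dist_eq_one_iff_adj.2 (h.adj_of_dist_lt hG hl.symm (hl ▸ hz) hlt)
    omega

theorem isTwin_of_same_layer (h : AtMostOneCoresolving G (layerCount G c + 1))
    (hG : G.Connected) {x y u : V} (hy : G.dist c x = G.dist c y) (hu : G.dist c x = G.dist c u)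
    (hxy : ¬ IsTwin G x y) (hxu : ¬ IsTwin G x u) : IsTwin G y u := by
  by_contra hyu
  obtain ⟨z, hz, -⟩ := h.exists_gate hG hy hxy
  have := h.not_adj_iff_adj hG hy hxy hz
  have := h.not_adj_iff_adj hG hu hxu hz
  have := h.not_adj_iff_adj hG (hy.symm.trans hu) hyu (hy ▸ hz)
  tauto

theorem ncard_le_of_pairwise_not_isTwin (h : AtMostOneCoresolving G (layerCount G c + 1))
    (hG : G.Connected) {S : Set V} (hS : S.Pairwise fun x y ↦ ¬ IsTwin G x y) :
    S.ncard ≤ layerCount G c + 2 := by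
  by_cases hinj : S.InjOn (G.dist c)
  · exact (ncard_le_of_injOn_dist hinj).trans (Nat.le_succ _)
  simp only [Set.InjOn, not_forall] at hinj
  obtain ⟨x, hx, y, hy, hl, hxy⟩ := hinj
  have hinj' : (S \ {x}).InjOn (G.dist c) := by
    rintro u ⟨hu, hux⟩ v ⟨hv, hvx⟩ huv
    by_contra hne
    have hlayer : G.dist c x = G.dist c u := by
      rcases lt_trichotomy (G.dist c x) (G.dist c u) with hlt | heq | hgt
      · exact absurd (h.eq_of_layer_gt hG hl (hS hx hy hxy) hlt huv) hne
      · exact heq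
      · exact absurd (h.eq_of_layer_gt hG huv (hS hu hv hne) hgt hl) hxy
    exact hS hu hv hne (h.isTwin_of_same_layer hG hlayer (hlayer.trans huv)
      (hS hx hu (Ne.symm hux)) (hS hx hv (Ne.symm hvx)))
  have hcard := ncard_le_of_injOn_dist hinj'
  have := S.pred_ncard_le_ncard_sdiff_singleton x
  omega

theorem ncard_ne_diam_add_one [Nontrivial V] {T : Set V} (h : AtMostOneCoresolving G T.ncard)
    (hG : G.Connected) (hT : IsCoresolving G T) : T.ncard ≠ G.diam + 1 := by
  intro hcard
  -- The set `T ∪ {b, b'}` of pairwise non-twins will have one vertex too many.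
  obtain ⟨b, hb, b', hb', hne, hbb'⟩ : ∃ b ∉ T, ∃ b' ∉ T, b ≠ b' ∧ ¬ IsTwin G b b' := by
    by_contra! htwin
    have := hT.ncard_le_diam hG fun b hb b' hb' ↦ htwin b hb b' hb'
    omega
  have hpair : (insert b (insert b' T)).Pairwise fun x y ↦ ¬ IsTwin G x y := by
    have hmem : ∀ x ∈ T, ∀ y, x ≠ y → ¬ IsTwin G x y := fun x hx y ↦ h.not_isTwin hT hx
    rintro x (rfl | rfl | hx) y (rfl | rfl | hy) hxy htwin
    all_goals grind [IsTwin.symm]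
  obtain ⟨c, _, hc⟩ := G.exists_dist_eq_diam
  have hlayers := layerCount_eq_diam hG hc
  rw [hcard, ← hlayers] at h
  have hle := h.ncard_le_of_pairwise_not_isTwin hG hpair
  rw [Set.ncard_insert_of_notMem (by simp [hne, hb]), Set.ncard_insert_of_notMem hb'] at hle
  omega

end AtMostOneCoresolving

theorem UniquelyDimensional.metricDim_add_diam_add_two_le [Fintype V] [Nontrivial V]
    (hG : G.Connected) (hud : UniquelyDimensional G) :
    metricDim G + G.diam + 2 ≤ Fintype.card V := by
  obtain ⟨B, hB, hBcard⟩ := hud.exists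
  have hT : IsCoresolving G (B : Set V)ᶜ := (isCoresolving_compl_iff hG).2 hB
  have hcard : metricDim G + (B : Set V)ᶜ.ncard = Fintype.card V := by
    rw [← hBcard, ← Set.ncard_coe_finset, Set.ncard_add_ncard_compl, Nat.card_eq_fintype_card]
  have hle := metricDim_add_diam_le hG
  have hunique := hud.atMostOneCoresolving hG hcard
  have hne : (B : Set V)ᶜ.ncard ≠ G.diam := fun heq ↦
    not_atMostOneCoresolving_diam hG (heq ▸ hunique)
  have hne' := hunique.ncard_ne_diam_add_one hG hT
  omega

end

theorem stmt4 {V : Type*} [Fintype V] (G : SimpleGraph V)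
    (hconn : G.Connected) (hud : UniquelyDimensional G) :
    metricDim G ≤ Fintype.card V - G.diam - 2 := by
  rcases subsingleton_or_nontrivial V with hV | hV
  · have hempty : metricDim G = 0 := Nat.sInf_eq_zero.2
      (.inl ⟨∅, fun u v huv ↦ absurd (Subsingleton.elim u v) huv, Finset.card_empty⟩)
    omega
  · have := hud.metricDim_add_diam_add_two_le hconn
    omega
end

section
/- For every integer k ≥ 2, let n_0(k) denote the minimum order of a uniquely k-dimensional finite connected simple graph. Then 2k + 1 ≤ n_0(k) ≤ ⌈5k/2⌉ + 1; in particular, a uniquely k-dimensional graph of some order exists, every uniquely k-dimensional graph has order at least 2k+1, and a uniquely k-dimensional graph of order ⌈5k/2⌉ + 1 or smaller exists. -/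
open SimpleGraph

/-!
Lower bound. If `B` is the unique metric basis and `b ∈ B`, then neither `B \ {b}` nor any set
`B \ {b} ∪ {x}` with `x ∉ B` is resolving, and this forces two vertices outside `B` that only `b`
distinguishes. The distance vectors of the vertices outside `B` are thus a code all of whose
`|B|` coordinates are essential, and by Bondy's theorem such a code has more than `|B|` words.

Upper bound. Let `H` be a graph without isolated vertices on `k` vertices. Subdivide its edges,
hang a leaf at each vertex of `H`, add an isolated vertex, and pass to the complement. All distances
are then at most two, so that vertices outside `W` are told apart only by their neighbours in `W`.
A resolving set of at most `k` vertices meets each pair formed by a vertex of `H` and its leaf, up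
to one pair for which it spends the isolated vertex instead. It has room for nothing else, and if it
missed a vertex of `H`, then a subdivision vertex next to it would be confused with the leaf at the
other end, or with a vertex that has no neighbour in `W`. The order is `1 + 2k + |E(H)|`, and
`⌈k/2⌉` edges suffice to leave no vertex of `H` isolated.
-/

section ResolvingSets

variable {V : Type*} {G : SimpleGraph V} {W B : Finset V} {b u v : V}

lemma isResolvingSet_iff_eqOn_dist :
    IsResolvingSet G W ↔ ∀ u v, Set.EqOn (G.dist u) (G.dist v) W → u = v := by
  refine forall₂_congr fun u v => ?_
  rw [ne_eq, not_imp_comm]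
  simp only [Set.EqOn, SetLike.mem_coe, not_exists, not_and, not_not, ne_eq]

lemma metricDim_le_card (h : IsResolvingSet G W) : metricDim G ≤ W.card :=
  Nat.sInf_le ⟨W, h, rfl⟩

lemma IsResolvingSet.uniquelyKDimensional (hB : IsResolvingSet G B)
    (h : ∀ W, IsResolvingSet G W → W.card ≤ B.card → W = B) :
    UniquelyKDimensional G B.card := by
  have hdim : B.card = metricDim G := by
    obtain ⟨W, hW, hcard⟩ : ∃ W, IsResolvingSet G W ∧ W.card = metricDim G :=
      Nat.sInf_mem (s := {k | ∃ W, IsResolvingSet G W ∧ W.card = k}) ⟨_, B, hB, rfl⟩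
    rwa [h W hW (hcard.trans_le (metricDim_le_card hB))] at hcard
  exact ⟨⟨B, ⟨hB, hdim⟩, fun W hW => h W hW.1 (hW.2.trans hdim.symm).le⟩, hdim.symm⟩

lemma notMem_of_eqOn_dist (hG : G.Connected) (huv : u ≠ v)
    (h : Set.EqOn (G.dist u) (G.dist v) W) : u ∉ W := fun hu =>
  huv (hG.dist_eq_zero_iff.1 ((h hu).symm.trans dist_self)).symm

lemma exists_eqOn_dist_of_not_isResolvingSet (hG : G.Connected) (h : ¬ IsResolvingSet G W) (b : V) :
    ∃ u ∉ W, ∃ v ∉ W, u ≠ v ∧ v ≠ b ∧ Set.EqOn (G.dist u) (G.dist v) W := by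
  rw [isResolvingSet_iff_eqOn_dist] at h
  push Not at h
  obtain ⟨u, v, heq, huv⟩ := h
  have hu := notMem_of_eqOn_dist hG huv heq
  have hv := notMem_of_eqOn_dist hG huv.symm heq.symm
  by_cases hvb : v = b
  · exact ⟨v, hv, u, hu, huv.symm, hvb ▸ huv, heq.symm⟩
  · exact ⟨u, hu, v, hv, huv, hvb, heq⟩

variable [DecidableEq V]

lemma IsMetricBasis.not_isResolvingSet_erase (hB : IsMetricBasis G B) (hb : b ∈ B) :
    ¬ IsResolvingSet G (B.erase b) := fun h =>
  (Finset.card_erase_lt_of_mem hb).not_ge (hB.2.trans_le (metricDim_le_card h))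

lemma IsMetricBasis.not_isResolvingSet_insert_erase (hB : IsMetricBasis G B)
    (huniq : ∀ W, IsMetricBasis G W → W = B) (hb : b ∈ B) (hv : v ∉ B) :
    ¬ IsResolvingSet G (insert v (B.erase b)) := fun h => by
  have hcard : (insert v (B.erase b)).card = B.card := by
    rw [Finset.card_insert_of_notMem fun hmem => hv (Finset.mem_of_mem_erase hmem),
      Finset.card_erase_add_one hb]
  exact hv (huniq _ ⟨h, hcard.trans hB.2⟩ ▸ Finset.mem_insert_self _ _)

lemma IsMetricBasis.exists_eqOn_dist_erase (hG : G.Connected) (hB : IsMetricBasis G B)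
    (huniq : ∀ W, IsMetricBasis G W → W = B) (hb : b ∈ B) :
    ∃ u ∉ B, ∃ v ∉ B, u ≠ v ∧ Set.EqOn (G.dist u) (G.dist v) (B.erase b) := by
  have notMem_of_ne {x : V} (hxb : x ≠ b) (hx : x ∉ B.erase b) : x ∉ B := fun hmem =>
    hx (Finset.mem_erase.2 ⟨hxb, hmem⟩)
  obtain ⟨u, hu, v, hv, huv, hvb, heq⟩ :=
    exists_eqOn_dist_of_not_isResolvingSet hG (hB.not_isResolvingSet_erase hb) b
  replace hv := notMem_of_ne hvb hv
  by_cases hub : u = b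
  · subst hub
    -- A pair unresolved by `B \ {u} ∪ {v}` either avoids `u`, or has `u` equivalent to some `y`,
    -- in which case `v` and `y` are equivalent through `u`.
    obtain ⟨x, hx, y, hy, hxy, hyu, hxyeq⟩ := exists_eqOn_dist_of_not_isResolvingSet hG
      (hB.not_isResolvingSet_insert_erase huniq hb hv) u
    rw [Finset.mem_insert, not_or] at hx hy
    replace hxyeq := hxyeq.mono (Finset.coe_subset.2 (Finset.subset_insert _ _))
    have hyB := notMem_of_ne hyu hy.2
    by_cases hxu : x = u
    · subst hxu
      exact ⟨v, hv, y, hyB, Ne.symm hy.1, heq.symm.trans hxyeq⟩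
    · exact ⟨x, notMem_of_ne hxu hx.2, y, hyB, hxy, hxyeq⟩
  · exact ⟨u, notMem_of_ne hub hu, v, hv, huv, heq⟩

end ResolvingSets

section LowerBound

/-- **Bondy's theorem** for words over an arbitrary alphabet. -/
theorem card_lt_card_of_forall_exists_ne {ι X α : Type*} [Fintype ι] [Fintype X] [Nonempty X]
    (f : ι → X → α) (h : ∀ i, ∃ x y, f i x ≠ f i y ∧ ∀ j ≠ i, f j x = f j y) :
    Fintype.card ι < Fintype.card X := by
  classical
  choose p q hne heq using h
  let T : (X → ℚ) →ₗ[ℚ] (ι → ℚ) := LinearMap.funLeft ℚ ℚ p - LinearMap.funLeft ℚ ℚ q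
  have hrange : LinearMap.range T = ⊤ := by
    rw [eq_top_iff, ← (Pi.basisFun ℚ ι).span_eq, Submodule.span_le]
    rintro _ ⟨i, rfl⟩
    refine ⟨fun x => if f i x = f i (p i) then 1 else 0, ?_⟩
    ext j
    obtain rfl | hji := eq_or_ne j i
    · simp [T, LinearMap.funLeft_apply, (hne j).symm]
    · simp [T, LinearMap.funLeft_apply, heq j i hji.symm, hji]
  have hker : LinearMap.ker T ≠ ⊥ := fun hbot =>
    one_ne_zero (LinearMap.ker_eq_bot'.1 hbot 1 (by ext; simp [T, LinearMap.funLeft_apply]))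
  have hrank := T.finrank_range_add_finrank_ker
  have hpos := Submodule.one_le_finrank_iff.2 hker
  rw [hrange, finrank_top, Module.finrank_fintype_fun_eq_card,
    Module.finrank_fintype_fun_eq_card] at hrank
  omega

theorem UniquelyDimensional.two_mul_metricDim_lt_card {V : Type*} [Fintype V] {G : SimpleGraph V}
    (hG : G.Connected) (h : UniquelyDimensional G) : 2 * metricDim G < Fintype.card V := by
  classical
  obtain ⟨B, hB, huniq⟩ := h
  have hpair (b : B) : ∃ x y : {x // x ∉ B}, G.dist x b ≠ G.dist y b ∧
      ∀ c ≠ b, G.dist x c = G.dist y c := by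
    obtain ⟨u, hu, v, hv, huv, heq⟩ := hB.exists_eqOn_dist_erase hG huniq b.2
    have heq' (c : B) (hc : c ≠ b) : G.dist u c = G.dist v c :=
      heq (Finset.mem_erase.2 ⟨Subtype.coe_ne_coe.2 hc, c.2⟩)
    refine ⟨⟨u, hu⟩, ⟨v, hv⟩, fun hbeq => huv ?_, heq'⟩
    refine isResolvingSet_iff_eqOn_dist.1 hB.1 u v fun c hc => ?_
    obtain hcb | hcb := eq_or_ne (⟨c, hc⟩ : B) b
    · subst hcb
      exact hbeq
    · exact heq' _ hcb
  have : Nonempty {x // x ∉ B} := by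
    obtain ⟨v⟩ := hG.nonempty
    by_cases hv : v ∈ B
    · exact ⟨(hpair ⟨v, hv⟩).choose⟩
    · exact ⟨⟨v, hv⟩⟩
  have hlt := card_lt_card_of_forall_exists_ne (fun (b : B) (x : {x // x ∉ B}) => G.dist x b) hpair
  rw [Fintype.card_subtype_compl, Fintype.card_coe, hB.2] at hlt
  omega

end LowerBound

section Isomorphism

variable {V V' : Type*} {G : SimpleGraph V} {G' : SimpleGraph V'}

lemma edist_hom_le (f : G →g G') (u v : V) : G'.edist (f u) (f v) ≤ G.edist u v :=
  le_iInf fun w => (edist_le (w.map f)).trans_eq (by rw [Walk.length_map])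

lemma dist_iso (e : G ≃g G') (u v : V) : G'.dist (e u) (e v) = G.dist u v := by
  refine congrArg ENat.toNat (le_antisymm (edist_hom_le e.toHom u v) ?_)
  simpa using edist_hom_le e.symm.toHom (e u) (e v)

lemma isResolvingSet_map_iso (e : G ≃g G') (W : Finset V) :
    IsResolvingSet G' (W.map e.toEquiv.toEmbedding) ↔ IsResolvingSet G W := by
  refine (e.toEquiv.forall_congr fun u => e.toEquiv.forall_congr fun v =>
    imp_congr e.injective.ne_iff.symm (e.toEquiv.exists_congr fun w =>
      and_congr (Finset.mem_map' _).symm ?_)).symm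
  rw [← dist_iso e u, ← dist_iso e v]
  rfl

lemma metricDim_eq_of_iso (e : G ≃g G') : metricDim G = metricDim G' := by
  refine congrArg sInf (Set.ext fun k => e.toEquiv.finsetCongr.exists_congr fun W => ?_)
  rw [Equiv.finsetCongr_apply, isResolvingSet_map_iso, Finset.card_map]

lemma UniquelyKDimensional.of_iso {k : ℕ} (h : UniquelyKDimensional G k) (e : G ≃g G') :
    UniquelyKDimensional G' k := by
  refine ⟨(e.toEquiv.finsetCongr.existsUnique_congr fun W => ?_).1 h.1,
    (metricDim_eq_of_iso e).symm.trans h.2⟩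
  rw [IsMetricBasis, IsMetricBasis, Equiv.finsetCongr_apply, isResolvingSet_map_iso,
    Finset.card_map, metricDim_eq_of_iso e]

end Isomorphism

section LocatingSets

variable {V : Type*} {G : SimpleGraph V} {W : Finset V} {u v z : V}

/-- `W` is a locating set for `G`: distinct vertices outside `W` have distinct neighbourhoods in
`W`. It plays the part of a resolving set when all distances are at most two. One vertex outside `W`
is allowed to have no neighbour in `W`. -/
def IsLocatingSet (G : SimpleGraph V) (W : Finset V) : Prop :=
  ∀ u ∉ W, ∀ v ∉ W, (∀ w ∈ W, G.Adj u w ↔ G.Adj v w) → u = v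

lemma IsLocatingSet.eq_of_forall_not_adj (hW : IsLocatingSet G W) (hu : u ∉ W) (hv : v ∉ W)
    (hu' : ∀ w ∈ W, ¬ G.Adj u w) (hv' : ∀ w ∈ W, ¬ G.Adj v w) : u = v :=
  hW u hu v hv fun w hw => iff_of_false (hu' w hw) (hv' w hw)

lemma isLocatingSet_compl_iff : IsLocatingSet Gᶜ W ↔ IsLocatingSet G W := by
  refine forall₄_congr fun u hu v hv => imp_congr_left (forall₂_congr fun w hw => ?_)
  rw [compl_adj, compl_adj, and_iff_right (ne_of_mem_of_not_mem hw hu).symm,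
    and_iff_right (ne_of_mem_of_not_mem hw hv).symm, not_iff_not]

lemma isResolvingSet_iff_isLocatingSet (hG : G.Connected) (h : ∀ u v, G.dist u v ≤ 2) :
    IsResolvingSet G W ↔ IsLocatingSet G W := by
  have hdist {u v w : V} (hu : u ∉ W) (hv : v ∉ W) (hw : w ∈ W) :
      G.dist u w = G.dist v w ↔ (G.Adj u w ↔ G.Adj v w) := by
    have hu0 := hG.pos_dist_of_ne (ne_of_mem_of_not_mem hw hu).symm
    have hv0 := hG.pos_dist_of_ne (ne_of_mem_of_not_mem hw hv).symm
    have hu2 := h u w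
    have hv2 := h v w
    rw [← dist_eq_one_iff_adj, ← dist_eq_one_iff_adj]
    omega
  rw [isResolvingSet_iff_eqOn_dist]
  refine ⟨fun hW u hu v hv huv => hW u v fun w hw => (hdist hu hv hw).2 (huv w hw),
    fun hW u v huv => by_contra fun hne => ?_⟩
  have hu := notMem_of_eqOn_dist hG hne huv
  have hv := notMem_of_eqOn_dist hG (Ne.symm hne) huv.symm
  exact hne (hW u hu v hv fun w hw => (hdist hu hv hw).1 (huv hw))

lemma dist_le_two_of_isUniversal (hz : G.IsUniversal z) (u v : V) : G.dist u v ≤ 2 := by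
  have hle (w : V) : G.dist z w ≤ 1 := by
    obtain rfl | hzw := eq_or_ne z w
    · simp
    · exact (dist_eq_one_iff_adj.2 (hz hzw)).le
  calc G.dist u v ≤ G.dist u z + G.dist z v := (Connected.of_isUniversal hz).dist_triangle
    _ ≤ 1 + 1 := add_le_add (dist_comm.trans_le (hle u)) (hle v)

lemma isResolvingSet_compl_iff_of_isIsolated (hz : G.IsIsolated z) :
    IsResolvingSet Gᶜ W ↔ IsLocatingSet G W := by
  have hz' : Gᶜ.IsUniversal z := isUniversal_compl_iff_isIsolated.2 hz
  rw [isResolvingSet_iff_isLocatingSet (.of_isUniversal hz') (dist_le_two_of_isUniversal hz'),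
    isLocatingSet_compl_iff]

end LocatingSets

lemma exists_mem_edge_ne {ι : Type*} {H : SimpleGraph ι} (e : H.edgeSet) (i : ι) :
    ∃ j ∈ e.1, j ≠ i := by
  obtain ⟨⟨a, b⟩, hab⟩ := e
  obtain rfl | hai := eq_or_ne a i
  · exact ⟨b, Sym2.mem_mk_right a b, (H.ne_of_adj hab).symm⟩
  · exact ⟨a, Sym2.mem_mk_left a b, hai⟩

/-- The vertices of `leafySubdivision H`: a hub and a leaf for each vertex of `H`, a link
subdividing each edge of `H`, and one isolated vertex. -/
inductive LeafySubdivisionVertex {ι : Type*} (H : SimpleGraph ι)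
  | isolated
  | hub (i : ι)
  | leaf (i : ι)
  | link (e : H.edgeSet)

open LeafySubdivisionVertex

/-- The graph obtained from `H` by subdividing every edge, attaching a leaf to every vertex of `H`
and adding an isolated vertex. Its complement is uniquely dimensional when `H` has no isolated
vertex. -/
def leafySubdivision {ι : Type*} (H : SimpleGraph ι) :
    SimpleGraph (LeafySubdivisionVertex H) where
  Adj
    | hub i, leaf j | leaf j, hub i => i = j
    | hub i, link e | link e, hub i => i ∈ e.1
    | _, _ => False
  symm := ⟨by rintro (_ | i | i | e) (_ | j | j | f) h <;> exact h⟩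
  loopless := ⟨by rintro (_ | i | i | e) h <;> exact h⟩

namespace leafySubdivision

variable {ι : Type*} {H : SimpleGraph ι} {W : Finset (LeafySubdivisionVertex H)}

lemma isIsolated_isolated : (leafySubdivision H).IsIsolated isolated := by
  rintro (_ | _ | _ | _) h <;> exact h

lemma leaf_adj_iff {i : ι} {v : LeafySubdivisionVertex H} :
    (leafySubdivision H).Adj (leaf i) v ↔ v = hub i := by
  cases v <;> simp [leafySubdivision]

lemma link_adj_iff {e : H.edgeSet} {v : LeafySubdivisionVertex H} :
    (leafySubdivision H).Adj (link e) v ↔ ∃ i ∈ e.1, v = hub i := by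
  cases v <;> simp [leafySubdivision]

lemma natCard_vertex [Finite ι] :
    Nat.card (LeafySubdivisionVertex H) = 2 * Nat.card ι + H.edgeSet.ncard + 1 := by
  let e : LeafySubdivisionVertex H ≃ Option ((ι ⊕ ι) ⊕ H.edgeSet) :=
    { toFun
        | isolated => none
        | hub i => some (.inl (.inl i))
        | leaf i => some (.inl (.inr i))
        | link e => some (.inr e)
      invFun
        | none => isolated
        | some (.inl (.inl i)) => hub i
        | some (.inl (.inr i)) => leaf i
        | some (.inr e) => link e
      left_inv := by rintro (_ | _ | _ | _) <;> rfl
      right_inv := by rintro (_ | (_ | _) | _) <;> rfl }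
  rw [Nat.card_congr e, Finite.card_option, Nat.card_sum, Nat.card_sum, Nat.card_coe_set_eq]
  ring

lemma forall_not_adj_leaf {i : ι} (hi : hub i ∉ W) :
    ∀ w ∈ W, ¬ (leafySubdivision H).Adj (leaf i) w := fun _ hw hadj =>
  hi (leaf_adj_iff.1 hadj ▸ hw)

variable [Fintype ι]

variable (H) in
/-- The set of hubs, which turns out to be the unique metric basis of the complement. -/
def hubs : Finset (LeafySubdivisionVertex H) :=
  Finset.univ.map ⟨hub, fun _ _ => hub.inj⟩

lemma hub_mem_hubs (i : ι) : hub i ∈ hubs H :=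
  Finset.mem_map_of_mem _ (Finset.mem_univ i)

lemma card_hubs : (hubs H).card = Fintype.card ι :=
  Finset.card_map _

lemma isLocatingSet_hubs : IsLocatingSet (leafySubdivision H) (hubs H) := by
  intro u hu v hv huv
  replace huv (i : ι) := huv (hub i) (hub_mem_hubs i)
  match u, v with
  | hub i, _ => exact absurd (hub_mem_hubs i) hu
  | _, hub i => exact absurd (hub_mem_hubs i) hv
  | isolated, isolated => rfl
  | leaf i, leaf j => exact congrArg leaf ((huv i).1 rfl)
  | link e, link f => exact congrArg link (Subtype.ext (Sym2.ext huv))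
  | isolated, leaf i => exact ((huv i).2 rfl).elim
  | leaf i, isolated => exact ((huv i).1 rfl).elim
  | isolated, link e => exact ((huv _).2 e.1.out_fst_mem).elim
  | link e, isolated => exact ((huv _).1 e.1.out_fst_mem).elim
  | leaf i, link e =>
    obtain ⟨j, hj, hji⟩ := exists_mem_edge_ne e i
    exact absurd ((huv j).2 hj) hji
  | link e, leaf i =>
    obtain ⟨j, hj, hji⟩ := exists_mem_edge_ne e i
    exact absurd ((huv j).1 hj) hji

/-- The map sends a vertex of `H` to its hub if possible, else to its leaf if possible, and
otherwise to the isolated vertex. -/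
lemma exists_coe_eq_range (hW : IsLocatingSet (leafySubdivision H) W)
    (hcard : W.card ≤ Fintype.card ι) :
    ∃ f : ι → LeafySubdivisionVertex H, W = Set.range f ∧ ∀ i, f i = hub i ∨
      f i = leaf i ∧ hub i ∉ W ∨ f i = isolated ∧ hub i ∉ W ∧ leaf i ∉ W := by
  have hmissed {i : ι} (hhub : hub i ∉ W) (hleaf : leaf i ∉ W) : isolated ∈ W := by
    by_contra hiso
    cases hW.eq_of_forall_not_adj hleaf hiso (forall_not_adj_leaf hhub)
      fun w _ => isIsolated_isolated w
  have hchoice (i : ι) : ∃ v ∈ W, v = hub i ∨ v = leaf i ∧ hub i ∉ W ∨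
      v = isolated ∧ hub i ∉ W ∧ leaf i ∉ W := by
    by_cases hhub : hub i ∈ W
    · exact ⟨_, hhub, .inl rfl⟩
    · by_cases hleaf : leaf i ∈ W
      · exact ⟨_, hleaf, .inr (.inl ⟨rfl, hhub⟩)⟩
      · exact ⟨_, hmissed hhub hleaf, .inr (.inr ⟨rfl, hhub, hleaf⟩)⟩
  choose f hfW hf using hchoice
  have hinj : Function.Injective f := fun i j hij => by
    obtain hi | ⟨hi, -⟩ | ⟨hi, hi₁, hi₂⟩ := hf i <;>
      obtain hj | ⟨hj, -⟩ | ⟨hj, hj₁, hj₂⟩ := hf j <;>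
      rw [hi, hj] at hij <;> cases hij
    · rfl
    · rfl
    · exact leaf.inj (hW.eq_of_forall_not_adj hi₂ hj₂ (forall_not_adj_leaf hi₁)
        (forall_not_adj_leaf hj₁))
  have hmap : Finset.univ.map ⟨f, hinj⟩ = W := by
    refine Finset.eq_of_subset_of_card_le (fun v hv => ?_) (hcard.trans_eq (Finset.card_map _).symm)
    obtain ⟨i, -, rfl⟩ := Finset.mem_map.1 hv
    exact hfW i
  exact ⟨f, by simp [← hmap], hf⟩

lemma link_notMem (hW : IsLocatingSet (leafySubdivision H) W)
    (hcard : W.card ≤ Fintype.card ι) (e : H.edgeSet) : link e ∉ W := fun he => by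
  obtain ⟨f, hrange, hf⟩ := exists_coe_eq_range hW hcard
  obtain ⟨i, hi⟩ : link e ∈ Set.range f := hrange ▸ he
  grind

lemma leaf_notMem_of_hub_mem (hW : IsLocatingSet (leafySubdivision H) W)
    (hcard : W.card ≤ Fintype.card ι) {i : ι} (hi : hub i ∈ W) : leaf i ∉ W := fun hleaf => by
  obtain ⟨f, hrange, hf⟩ := exists_coe_eq_range hW hcard
  obtain ⟨j, hj⟩ : leaf i ∈ Set.range f := hrange ▸ hleaf
  grind

lemma exists_undominated (hW : IsLocatingSet (leafySubdivision H) W)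
    (hcard : W.card ≤ Fintype.card ι) :
    ∃ v ∉ W, (∀ w ∈ W, ¬ (leafySubdivision H).Adj v w) ∧ ∀ e, v ≠ link e := by
  by_cases hiso : isolated ∈ W
  · obtain ⟨f, hrange, hf⟩ := exists_coe_eq_range hW hcard
    obtain ⟨i, hi⟩ : isolated ∈ Set.range f := hrange ▸ hiso
    obtain ⟨hhub, hleaf⟩ : hub i ∉ W ∧ leaf i ∉ W := by grind
    exact ⟨leaf i, hleaf, forall_not_adj_leaf hhub, fun _ => by simp⟩
  · exact ⟨isolated, hiso, fun w _ => isIsolated_isolated w, fun _ => by simp⟩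

lemma hub_mem (hW : IsLocatingSet (leafySubdivision H) W) (hcard : W.card ≤ Fintype.card ι)
    {i : ι} (hi : ¬ H.IsIsolated i) : hub i ∈ W := by
  by_contra hhub
  obtain ⟨j, hij⟩ := exists_adj_iff_not_isIsolated.2 hi
  let e : H.edgeSet := ⟨s(i, j), hij⟩
  have he : link e ∉ W := link_notMem hW hcard e
  have hadj : ∀ w ∈ W, (leafySubdivision H).Adj (link e) w ↔ w = hub j := by
    intro w hw
    simp only [link_adj_iff, e, Sym2.mem_iff, exists_eq_or_imp, exists_eq_left,
      or_iff_right (fun h : w = hub i => hhub (h ▸ hw))]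
  by_cases hj : hub j ∈ W
  · cases hW _ he (leaf j) (leaf_notMem_of_hub_mem hW hcard hj) fun w hw =>
      (hadj w hw).trans leaf_adj_iff.symm
  · obtain ⟨v, hv, hv', hne⟩ := exists_undominated hW hcard
    exact hne e (hW.eq_of_forall_not_adj hv he hv' fun w hw h => hj ((hadj w hw).1 h ▸ hw))

lemma eq_hubs_of_isLocatingSet (hH : ∀ i, ¬ H.IsIsolated i)
    (hW : IsLocatingSet (leafySubdivision H) W) (hcard : W.card ≤ Fintype.card ι) :
    W = hubs H := by
  refine (Finset.eq_of_subset_of_card_le (fun v hv => ?_) (hcard.trans_eq card_hubs.symm)).symm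
  obtain ⟨i, -, rfl⟩ := Finset.mem_map.1 hv
  exact hub_mem hW hcard (hH i)

theorem uniquelyKDimensional_compl (hH : ∀ i, ¬ H.IsIsolated i) :
    UniquelyKDimensional (leafySubdivision H)ᶜ (Fintype.card ι) := by
  have hiff {W : Finset (LeafySubdivisionVertex H)} :=
    isResolvingSet_compl_iff_of_isIsolated (W := W) (isIsolated_isolated (H := H))
  rw [← card_hubs (H := H)]
  exact (hiff.2 isLocatingSet_hubs).uniquelyKDimensional fun W hW hcard =>
    eq_hubs_of_isLocatingSet hH (hiff.1 hW) (hcard.trans_eq card_hubs)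

end leafySubdivision

theorem exists_uniquelyKDimensional_card {ι : Type*} [Fintype ι] {H : SimpleGraph ι}
    (hH : ∀ i, ¬ H.IsIsolated i) :
    ∃ G : SimpleGraph (Fin (2 * Fintype.card ι + H.edgeSet.ncard + 1)), G.Connected ∧
      UniquelyKDimensional G (Fintype.card ι) := by
  have hcard : Nat.card (LeafySubdivisionVertex H) = 2 * Fintype.card ι + H.edgeSet.ncard + 1 := by
    rw [leafySubdivision.natCard_vertex, Nat.card_eq_fintype_card]
  have : Finite (LeafySubdivisionVertex H) := Nat.finite_of_card_ne_zero (by omega)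
  let e := Iso.map (Finite.equivFinOfCardEq hcard) (leafySubdivision H)ᶜ
  have hconn : (leafySubdivision H)ᶜ.Connected :=
    .of_isUniversal (isUniversal_compl_iff_isIsolated.2 leafySubdivision.isIsolated_isolated)
  exact ⟨_, e.connected_iff.1 hconn, (leafySubdivision.uniquelyKDimensional_compl hH).of_iso e⟩

lemma exists_forall_not_isIsolated_ncard_edgeSet_le {k : ℕ} (hk : 2 ≤ k) :
    ∃ H : SimpleGraph (Fin k), (∀ i, ¬ H.IsIsolated i) ∧ H.edgeSet.ncard ≤ (k + 1) / 2 := by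
  let edge (j : Fin ((k + 1) / 2)) : Sym2 (Fin k) :=
    s(⟨j, by omega⟩, ⟨j + k / 2, by omega⟩)
  refine ⟨fromEdgeSet (Set.range edge), fun i => exists_adj_iff_not_isIsolated.1 ?_, ?_⟩
  · by_cases hi : i < (k + 1) / 2
    · refine ⟨⟨i + k / 2, by omega⟩, (fromEdgeSet_adj _).2 ⟨⟨⟨i, hi⟩, rfl⟩, ?_⟩⟩
      simp only [ne_eq, Fin.ext_iff]
      omega
    · refine ⟨⟨i - k / 2, by omega⟩, (fromEdgeSet_adj _).2 ⟨⟨⟨i - k / 2, by omega⟩, ?_⟩, ?_⟩⟩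
      · rw [Sym2.eq_swap]
        simp only [edge, Nat.sub_add_cancel (show k / 2 ≤ i by omega)]
      · simp only [ne_eq, Fin.ext_iff]
        omega
  · calc (fromEdgeSet (Set.range edge)).edgeSet.ncard ≤ (Set.range edge).ncard := by
          rw [edgeSet_fromEdgeSet]
          exact Set.ncard_le_ncard Set.sdiff_subset
      _ ≤ (k + 1) / 2 := by
          rw [← Set.image_univ]
          simpa using Set.ncard_image_le (f := edge) (s := Set.univ)

theorem stmt18 (k : ℕ) (hk : 2 ≤ k) :
    {n : ℕ | ∃ G : SimpleGraph (Fin n), G.Connected ∧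
        UniquelyKDimensional G k}.Nonempty ∧
    2 * k + 1 ≤ sInf {n : ℕ | ∃ G : SimpleGraph (Fin n), G.Connected ∧
        UniquelyKDimensional G k} ∧
    sInf {n : ℕ | ∃ G : SimpleGraph (Fin n), G.Connected ∧
        UniquelyKDimensional G k} ≤ (5 * k + 1) / 2 + 1 ∧
    (∀ (V : Type) (inst : Fintype V) (G : SimpleGraph V),
      G.Connected → UniquelyKDimensional G k → 2 * k + 1 ≤ @Fintype.card V inst) := by
  obtain ⟨H, hH, hedges⟩ := exists_forall_not_isIsolated_ncard_edgeSet_le hk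
  have hmem := exists_uniquelyKDimensional_card hH
  rw [Fintype.card_fin] at hmem
  have hlower (V : Type) [Fintype V] (G : SimpleGraph V) (hG : G.Connected)
      (h : UniquelyKDimensional G k) : 2 * k + 1 ≤ Fintype.card V :=
    h.2 ▸ h.1.two_mul_metricDim_lt_card hG
  refine ⟨⟨_, hmem⟩, le_csInf ⟨_, hmem⟩ ?_, (Nat.sInf_le hmem).trans (by omega),
    fun V _ => hlower V⟩
  rintro m ⟨G, hG, h⟩
  simpa using hlower (Fin m) G hG h
end

section
/- The minimum order of a uniquely 2-dimensional finite connected simple graph is 6: there exists a uniquely 2-dimensional graph of order 6, and every uniquely 2-dimensional finite connected simple graph has order at least 6. -/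
open SimpleGraph

/-!
The lower bound uses only that the distance is symmetric and separates points. Let `{x, y}` be the
only metric basis. Some two further points `a`, `b` are equidistant from `y`: otherwise a single
pair `{x, p}` is left unresolved by `y`, and then `{y, p}` resolves as well. Likewise some two
further points are equidistant from `x`. These two pairs are distinct, so with at most five points
they share a point: they are `{a, b}` and `{a, c}`, and the points are `x`, `y`, `a`, `b`, `c`.
Moreover `b` is not at the distance of `a` and `c` from `x`, so a set `{x, z}` with `z ≠ y` leaves
unresolved one of very few pairs. The resulting equalities show that `y` does not separate `a` and
`c` either.

For the existence, distances in a graph of diameter two can be read off from adjacency.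
-/

/-- A dissimilarity: a symmetric two-variable function whose diagonal value `d v v` is attained by
`d · v` at `v` only. It abstracts the properties of a metric that do not involve its values. -/
structure IsDissimilarity {V α : Type*} (d : V → V → α) : Prop where
  symm : ∀ u v, d u v = d v u
  eq_of_eq_diag : ∀ {u v}, d u v = d v v → u = v

/-- `W` is a resolving set for `d`, as in `IsResolvingSet`, for a function `d` that need not be the
distance of a graph. -/
def Resolves {V α : Type*} (d : V → V → α) (W : Finset V) : Prop :=
  ∀ u v : V, u ≠ v → ∃ w ∈ W, d u w ≠ d v w

/-- `B` is the only metric basis for `d`, expressed without the metric dimension: `B` is the only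
resolving set with at most `B.card` elements. -/
def IsUniqueBasis {V α : Type*} (d : V → V → α) (B : Finset V) : Prop :=
  ∀ W : Finset V, W.card ≤ B.card → (Resolves d W ↔ W = B)

section GraphDistance

variable {V : Type*} {G : SimpleGraph V}

lemma isDissimilarity_dist (hG : G.Connected) : IsDissimilarity G.dist where
  symm _ _ := dist_comm
  eq_of_eq_diag h := hG.dist_eq_zero_iff.mp (h.trans dist_self)

lemma IsResolvingSet.metricDim_le {W : Finset V} (hW : IsResolvingSet G W) :
    metricDim G ≤ W.card :=
  Nat.sInf_le ⟨W, hW, rfl⟩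

lemma IsResolvingSet.exists_isMetricBasis {W : Finset V} (hW : IsResolvingSet G W) :
    ∃ B, IsMetricBasis G B :=
  Nat.sInf_mem (s := {k | ∃ W : Finset V, IsResolvingSet G W ∧ W.card = k}) ⟨_, W, hW, rfl⟩

lemma uniquelyKDimensional_iff {k : ℕ} :
    UniquelyKDimensional G k ↔ ∃ B, IsUniqueBasis G.dist B ∧ B.card = k := by
  constructor
  · rintro ⟨⟨B, ⟨hB, hcard⟩, huniq⟩, rfl⟩
    refine ⟨B, fun W hle => ⟨fun hW => huniq W ⟨hW, ?_⟩, fun h => h ▸ hB⟩, hcard⟩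
    exact (hle.trans hcard.le).antisymm (IsResolvingSet.metricDim_le hW)
  · rintro ⟨B, hB, rfl⟩
    have hres : IsResolvingSet G B := (hB B le_rfl).mpr rfl
    have eq_of_isMetricBasis {W : Finset V} (hW : IsMetricBasis G W) : W = B :=
      (hB W (hW.2.trans_le (IsResolvingSet.metricDim_le hres))).mp hW.1
    obtain ⟨W, hW⟩ := IsResolvingSet.exists_isMetricBasis hres
    obtain rfl := eq_of_isMetricBasis hW
    exact ⟨⟨W, hW, fun _ => eq_of_isMetricBasis⟩, hW.2.symm⟩

end GraphDistance

namespace IsUniqueBasis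

variable {V α : Type*} [DecidableEq V] {d : V → V → α} {x y : V}

lemma dist_ne_of_dist_eq (hB : IsUniqueBasis d {x, y}) {u v : V} (huv : u ≠ v)
    (hx : d u x = d v x) : d u y ≠ d v y := by
  simpa [hx] using (hB _ le_rfl).mpr rfl u v huv

lemma exists_unresolved (hd : IsDissimilarity d) (hB : IsUniqueBasis d {x, y}) (hxy : x ≠ y)
    {z : V} (hz : z ≠ y) :
    ∃ u ∉ ({x, z} : Finset V), ∃ v ∉ ({x, z} : Finset V),
      u ≠ v ∧ d u x = d v x ∧ d u z = d v z := by
  have hres : ¬ Resolves d {x, z} := fun hres => by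
    have hcard : ({x, z} : Finset V).card ≤ ({x, y} : Finset V).card :=
      Finset.card_le_two.trans (Finset.card_pair hxy).ge
    have hy : y ∈ ({x, z} : Finset V) := by simp [(hB _ hcard).mp hres]
    simp [hxy.symm, hz.symm] at hy
  obtain ⟨u, v, huv, h⟩ : ∃ u v, u ≠ v ∧ ∀ w ∈ ({x, z} : Finset V), d u w = d v w := by
    simpa only [Resolves, not_forall, not_exists, not_and, not_not, exists_prop] using hres
  have hu : u ∉ ({x, z} : Finset V) := fun hu => huv (hd.eq_of_eq_diag (h u hu).symm).symm
  have hv : v ∉ ({x, z} : Finset V) := fun hv => huv (hd.eq_of_eq_diag (h v hv))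
  exact ⟨u, hu, v, hv, huv, h x (by simp), h z (by simp)⟩

/- Otherwise the only pair at equal distances from `x` has the form `{y, p}`, and `{x, p}`
resolves. -/
lemma exists_ne_dist_eq (hd : IsDissimilarity d) (hB : IsUniqueBasis d {x, y}) (hxy : x ≠ y) :
    ∃ p ∉ ({x, y} : Finset V), ∃ q ∉ ({x, y} : Finset V), p ≠ q ∧ d p x = d q x := by
  by_contra! hinj
  have exists_confused {z : V} (hz : z ≠ y) :
      ∃ p ∉ ({x, y} : Finset V), d p x = d y x ∧ d p z = d y z := by
    obtain ⟨u, hu, v, hv, huv, hux, huz⟩ := hB.exists_unresolved hd hxy hz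
    simp only [Finset.mem_insert, Finset.mem_singleton, not_or] at hu hv hinj ⊢
    by_cases huy : u = y
    · exact ⟨v, ⟨hv.1, huy ▸ huv.symm⟩, huy ▸ hux.symm, huy ▸ huz.symm⟩
    by_cases hvy : v = y
    · exact ⟨u, ⟨hu.1, huy⟩, hvy ▸ hux, hvy ▸ huz⟩
    · exact absurd hux (hinj u ⟨hu.1, huy⟩ v ⟨hv.1, hvy⟩ huv)
  obtain ⟨p, hp, hpx, -⟩ := exists_confused hxy
  have hpy : p ≠ y := fun h => hp (by simp [h])
  obtain ⟨q, hq, hqx, hqp⟩ := exists_confused hpy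
  obtain rfl : q = p := by
    by_contra hne
    exact hinj q hq p hp hne (hqx.trans hpx.symm)
  exact hpy (hd.eq_of_eq_diag hqp.symm).symm

/- The pair which `{x, z}` fails to resolve lies in `{p, q, r}` and does not contain `q`. -/
lemma dist_eq_of_forall_mem (hd : IsDissimilarity d) (hB : IsUniqueBasis d {x, y}) (hxy : x ≠ y)
    {z p q r : V} (hz : z ≠ y) (hmem : ∀ v, v ∈ ({x, z, p, q, r} : Finset V))
    (hp : d p x ≠ d q x) (hr : d r x ≠ d q x) : d p z = d r z := by
  obtain ⟨u, hu, v, hv, huv, hux, huz⟩ := hB.exists_unresolved hd hxy hz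
  have mem_triple {w : V} (hw : w ∉ ({x, z} : Finset V)) : w = p ∨ w = q ∨ w = r := by
    have := hmem w
    simp only [Finset.mem_insert, Finset.mem_singleton] at hw this
    tauto
  rcases mem_triple hu with rfl | rfl | rfl <;> rcases mem_triple hv with rfl | rfl | rfl
  all_goals grind

lemma exists_notMem_five (hd : IsDissimilarity d) (hB : IsUniqueBasis d {x, y}) (hxy : x ≠ y)
    {a b c : V} (ha : a ≠ y) (hb : b ≠ y) (hc : c ≠ y) (hab : a ≠ b) (hac : a ≠ c)
    (hy : d a y = d b y) (hx : d a x = d c x) : ∃ v, v ∉ ({x, y, a, b, c} : Finset V) := by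
  by_contra! hmem
  have habx : d a x ≠ d b x := fun h => hB.dist_ne_of_dist_eq hab h hy
  have hcbx : d c x ≠ d b x := hx ▸ habx
  apply hB.dist_ne_of_dist_eq hac hx
  by_cases hyb : d y x = d b x
  · have hya : d y a = d b a := hB.dist_eq_of_forall_mem hd hxy ha (q := c)
      (fun v => by grind [hmem v]) (hyb ▸ hcbx.symm) hcbx.symm
    have hyc : d y c = d b c := hB.dist_eq_of_forall_mem hd hxy hc (q := a)
      (fun v => by grind [hmem v]) (hyb ▸ habx.symm) habx.symm
    have hacb : d a b = d c b := hB.dist_eq_of_forall_mem hd hxy hb (q := y)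
      (fun v => by grind [hmem v]) (hyb ▸ habx) (hyb ▸ hcbx)
    calc d a y = d b a := (hd.symm a y).trans hya
      _ = d b c := by rw [hd.symm b a, hacb, hd.symm c b]
      _ = d c y := hyc.symm.trans (hd.symm y c)
  · have hya : d y a = d c a := hB.dist_eq_of_forall_mem hd hxy ha (q := b)
      (fun v => by grind [hmem v]) hyb hcbx
    have hyc : d y c = d a c := hB.dist_eq_of_forall_mem hd hxy hc (q := b)
      (fun v => by grind [hmem v]) hyb habx
    calc d a y = d c a := (hd.symm a y).trans hya
      _ = d a c := hd.symm c a
      _ = d c y := hyc.symm.trans (hd.symm y c)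

lemma six_le_card_of_dist_eq_of_dist_eq [Fintype V] (hd : IsDissimilarity d)
    (hB : IsUniqueBasis d {x, y}) (hxy : x ≠ y) {a b c : V} (ha : a ∉ ({x, y} : Finset V))
    (hb : b ∉ ({x, y} : Finset V)) (hc : c ∉ ({x, y} : Finset V)) (hab : a ≠ b) (hac : a ≠ c)
    (hy : d a y = d b y) (hx : d a x = d c x) : 6 ≤ Fintype.card V := by
  have hbc : b ≠ c := fun h => hB.dist_ne_of_dist_eq hac hx (h ▸ hy)
  simp only [Finset.mem_insert, Finset.mem_singleton, not_or] at ha hb hc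
  obtain ⟨v, hv⟩ := hB.exists_notMem_five hd hxy ha.2 hb.2 hc.2 hab hac hy hx
  have hcard : ({x, y, a, b, c} : Finset V).card = 5 := by grind
  have hlt := Finset.card_lt_univ_of_notMem hv
  rwa [hcard] at hlt

end IsUniqueBasis

theorem IsUniqueBasis.six_le_card {V α : Type*} [Fintype V] {d : V → V → α} {B : Finset V}
    (hd : IsDissimilarity d) (hB : IsUniqueBasis d B) (hcard : B.card = 2) :
    6 ≤ Fintype.card V := by
  classical
  obtain ⟨x, y, hxy, rfl⟩ := Finset.card_eq_two.mp hcard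
  obtain ⟨a, ha, b, hb, hab, hy⟩ :=
    (Finset.pair_comm x y ▸ hB).exists_ne_dist_eq hd hxy.symm
  rw [Finset.pair_comm] at ha hb
  obtain ⟨p, hp, q, hq, hpq, hx⟩ := hB.exists_ne_dist_eq hd hxy
  by_cases hdisj : Disjoint ({a, b} : Finset V) {p, q}
  · have hcard : ({x, y, a, b, p, q} : Finset V).card = 6 := by grind [Finset.disjoint_left]
    exact hcard ▸ Finset.card_le_univ _
  · obtain ⟨v, hvab, hvpq⟩ := Finset.not_disjoint_iff.mp hdisj
    simp only [Finset.mem_insert, Finset.mem_singleton] at hvab hvpq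
    rcases hvab with rfl | rfl <;> rcases hvpq with rfl | rfl
    · exact hB.six_le_card_of_dist_eq_of_dist_eq hd hxy ha hb hq hab hpq hy hx
    · exact hB.six_le_card_of_dist_eq_of_dist_eq hd hxy ha hb hp hab hpq.symm hy hx.symm
    · exact hB.six_le_card_of_dist_eq_of_dist_eq hd hxy hb ha hq hab.symm hpq hy.symm hx
    · exact hB.six_le_card_of_dist_eq_of_dist_eq hd hxy hb ha hp hab.symm hpq.symm hy.symm hx.symm

instance {V α : Type*} [Fintype V] [DecidableEq V] [DecidableEq α] (d : V → V → α) :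
    DecidablePred (Resolves d) := fun W =>
  inferInstanceAs (Decidable (∀ u v : V, u ≠ v → ∃ w ∈ W, d u w ≠ d v w))

section DiameterTwo

variable {V : Type*} {G : SimpleGraph V}

lemma connected_of_nonempty_commonNeighbors [Nonempty V]
    (h : ∀ u v, u ≠ v → ¬ G.Adj u v → (G.commonNeighbors u v).Nonempty) : G.Connected where
  preconnected u v := by
    by_cases huv : u = v
    · exact huv ▸ Reachable.refl u
    by_cases hadj : G.Adj u v
    · exact hadj.reachable
    · obtain ⟨w, huw, hvw⟩ := h u v huv hadj
      exact huw.reachable.trans hvw.reachable.symm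

lemma dist_eq_ite_of_nonempty_commonNeighbors [DecidableEq V] [DecidableRel G.Adj]
    (h : ∀ u v, u ≠ v → ¬ G.Adj u v → (G.commonNeighbors u v).Nonempty) :
    G.dist = fun u v => if u = v then 0 else if G.Adj u v then 1 else 2 := by
  ext u v
  split_ifs with huv hadj
  · rw [huv, dist_self]
  · exact dist_eq_one_iff_adj.mpr hadj
  · rw [SimpleGraph.dist, edist_eq_two_iff.mpr ⟨huv, hadj, h u v huv hadj⟩, ENat.toNat_ofNat]

end DiameterTwo

/-- A graph of order six whose only metric basis is `{0, 1}`, given as the complement of a tree: the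
vertex `5` is joined to `4` and starts the two paths `5 - 0 - 3` and `5 - 1 - 2`. -/
def sixGraph : SimpleGraph (Fin 6) :=
  (fromEdgeSet {s(5, 4), s(5, 0), s(0, 3), s(5, 1), s(1, 2)})ᶜ

instance : DecidableRel sixGraph.Adj :=
  inferInstanceAs (DecidableRel (fromEdgeSet {s(5, 4), s(5, 0), s(0, 3), s(5, 1), s(1, 2)})ᶜ.Adj)

lemma sixGraph_nonempty_commonNeighbors :
    ∀ u v, u ≠ v → ¬ sixGraph.Adj u v → (sixGraph.commonNeighbors u v).Nonempty := by
  simp only [Set.Nonempty, mem_commonNeighbors]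
  decide

lemma isUniqueBasis_sixGraph_dist : IsUniqueBasis sixGraph.dist {0, 1} := by
  rw [dist_eq_ite_of_nonempty_commonNeighbors sixGraph_nonempty_commonNeighbors, IsUniqueBasis]
  decide

theorem stmt19_general :
    (∃ G : SimpleGraph (Fin 6), G.Connected ∧ UniquelyKDimensional G 2) ∧
    ∀ {V α : Type*} [Fintype V] {d : V → V → α} {B : Finset V},
      IsDissimilarity d → IsUniqueBasis d B → B.card = 2 → 6 ≤ Fintype.card V :=
  ⟨⟨sixGraph, connected_of_nonempty_commonNeighbors sixGraph_nonempty_commonNeighbors,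
    uniquelyKDimensional_iff.mpr ⟨_, isUniqueBasis_sixGraph_dist, rfl⟩⟩,
    fun hd hB hcard => hB.six_le_card hd hcard⟩

theorem stmt19 :
    (∃ G : SimpleGraph (Fin 6), G.Connected ∧ UniquelyKDimensional G 2) ∧
    (∀ (V : Type) (inst : Fintype V) (G : SimpleGraph V),
      G.Connected → UniquelyKDimensional G 2 → 6 ≤ @Fintype.card V inst) := by
  refine ⟨stmt19_general.{0, 0}.1, fun V _ G hG h => ?_⟩
  obtain ⟨B, hB, hcard⟩ := uniquelyKDimensional_iff.mp h
  exact stmt19_general.2 (isDissimilarity_dist hG) hB hcard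
end
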